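/- The weak topology p on Aut(X,𝓑) is strictly stronger than the topology p̄: every p̄-open set is p-open, but there exists a p-open set that is not p̄-open. -/

import Mathlib

/-!
Agreement with `S₀` on `A` and on `S₀⁻¹ A` for every `A` in a finite family is a `p`-neighbourhood
of `S₀`, and it makes all symmetric differences appearing in a `p̄`-ball around any `T` the same for
`S` as for `S₀`. Hence `p̄`-balls are `p`-open (`isOpen_pBarBall`).

For strictness, measures have at most countably many atoms, so a `p̄`-open set containing the
identity contains every transposition of two points lying outside some countable set
(`exists_countable_swap_mem`): such a transposition moves only null points for the finitely many
measures involved. If `A` is a Borel set with `A` and its complement both uncountable, the `p`-open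
set of automorphisms preserving `A` contains the identity, but not the transposition of a point
of `A` with a point outside `A`, so it is not `p̄`-open.
-/

open MeasureTheory Set Filter Topology
open scoped ENNReal

namespace BDK

variable {X : Type*} [MeasurableSpace X]

/-- The set `E(S,T)` where `S` and `T` (or their inverses) disagree. -/
def Edis (S T : X ≃ᵐ X) : Set X :=
  {x | S x ≠ T x} ∪ {x | S.symm x ≠ T.symm x}

/-- A finite family of Borel probability measures. -/
def IsProbFamily (M : Set (Measure X)) : Prop :=
  M.Finite ∧ ∀ μ ∈ M, IsProbabilityMeasure μ

/-- A finite family of non-atomic (continuous) Borel probability measures. -/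
def IsContProbFamily (M : Set (Measure X)) : Prop :=
  M.Finite ∧ ∀ μ ∈ M, IsProbabilityMeasure μ ∧ ∀ x : X, μ {x} = 0

/-- A finite family of Borel sets. -/
def IsBorelFamily (F : Set (Set X)) : Prop :=
  F.Finite ∧ ∀ A ∈ F, MeasurableSet A

/-- A finite family of uncountable Borel sets. -/
def IsUncountableBorelFamily (F : Set (Set X)) : Prop :=
  F.Finite ∧ ∀ A ∈ F, MeasurableSet A ∧ ¬ A.Countable

/-- Basic `τ`-neighborhood `U(T; μ₁,…,μₙ; ε)`. -/
def tauBall (T : X ≃ᵐ X) (M : Set (Measure X)) (ε : ℝ≥0∞) : Set (X ≃ᵐ X) :=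
  {S | ∀ μ ∈ M, μ (Edis S T) < ε}

/-- The uniform topology `τ`. -/
def tau : TopologicalSpace (X ≃ᵐ X) :=
  .generateFrom {O | ∃ (T : X ≃ᵐ X) (M : Set (Measure X)) (ε : ℝ≥0∞),
    IsProbFamily M ∧ 0 < ε ∧ O = tauBall T M ε}

/-- The topology `τ₀`: like `τ` but with non-atomic measures only. -/
def tau0 : TopologicalSpace (X ≃ᵐ X) :=
  .generateFrom {O | ∃ (T : X ≃ᵐ X) (M : Set (Measure X)) (ε : ℝ≥0∞),
    IsContProbFamily M ∧ 0 < ε ∧ O = tauBall T M ε}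

/-- Basic `τ'`-neighborhood `U'(T; μ₁,…,μₙ; ε)`. -/
def tau'Ball (T : X ≃ᵐ X) (M : Set (Measure X)) (ε : ℝ≥0∞) : Set (X ≃ᵐ X) :=
  {S | ∀ μ ∈ M,
    (⨆ F ∈ {F : Set X | MeasurableSet F}, μ (symmDiff (T '' F) (S '' F))) < ε}

/-- The topology `τ'`. -/
def tau' : TopologicalSpace (X ≃ᵐ X) :=
  .generateFrom {O | ∃ (T : X ≃ᵐ X) (M : Set (Measure X)) (ε : ℝ≥0∞),
    IsProbFamily M ∧ 0 < ε ∧ O = tau'Ball T M ε}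

/-- The unit ball of bounded Borel functions. -/
def BorelUnitBall : Set (X → ℝ) := {f | Measurable f ∧ ∀ x, |f x| ≤ 1}

/-- Basic `τ''`-neighborhood `U''(T; μ₁,…,μₙ; ε)`. -/
def tau''Ball (T : X ≃ᵐ X) (M : Set (Measure X)) (ε : ℝ) : Set (X ≃ᵐ X) :=
  {S | ∀ μ ∈ M,
    (⨆ f ∈ (BorelUnitBall : Set (X → ℝ)),
      |(∫ x, f x ∂(Measure.map (⇑S) μ)) - ∫ x, f x ∂(Measure.map (⇑T) μ)|) < ε}

/-- The topology `τ''`. -/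
def tau'' : TopologicalSpace (X ≃ᵐ X) :=
  .generateFrom {O | ∃ (T : X ≃ᵐ X) (M : Set (Measure X)) (ε : ℝ),
    IsProbFamily M ∧ 0 < ε ∧ O = tau''Ball T M ε}

/-- A finite Borel partition of `X`. -/
def IsBorelPartition (P : Finset (Set X)) : Prop :=
  (∀ A ∈ P, MeasurableSet A) ∧ (P : Set (Set X)).PairwiseDisjoint id ∧
    ⋃₀ (P : Set (Set X)) = univ

/-- Basic `τ̃`-neighborhood `Ṽ(T; μ₁,…,μₙ; ε)`. -/
def tauTildeBall (T : X ≃ᵐ X) (M : Set (Measure X)) (ε : ℝ) : Set (X ≃ᵐ X) :=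
  {S | ∀ μ ∈ M,
    (⨆ P ∈ {P : Finset (Set X) | IsBorelPartition P},
      ∑ A ∈ P, |(μ (T '' A)).toReal - (μ (S '' A)).toReal|) < ε}

/-- The topology `τ̃`. -/
def tauTilde : TopologicalSpace (X ≃ᵐ X) :=
  .generateFrom {O | ∃ (T : X ≃ᵐ X) (M : Set (Measure X)) (ε : ℝ),
    IsProbFamily M ∧ 0 < ε ∧ O = tauTildeBall T M ε}

/-- Basic `τ̄`-neighborhood `V̄(T; μ₁,…,μₙ; ε)`. -/
def tauBarBall (T : X ≃ᵐ X) (M : Set (Measure X)) (ε : ℝ) : Set (X ≃ᵐ X) :=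
  {S | ∀ μ ∈ M,
    (⨆ F ∈ {F : Set X | MeasurableSet F},
      |(μ (T '' F)).toReal - (μ (S '' F)).toReal|) < ε}

/-- The topology `τ̄`. -/
def tauBar : TopologicalSpace (X ≃ᵐ X) :=
  .generateFrom {O | ∃ (T : X ≃ᵐ X) (M : Set (Measure X)) (ε : ℝ),
    IsProbFamily M ∧ 0 < ε ∧ O = tauBarBall T M ε}

/-- Basic `p`-neighborhood `W(T; F₁,…,Fₖ)`. -/
def pBall (T : X ≃ᵐ X) (F : Set (Set X)) : Set (X ≃ᵐ X) :=
  {S | ∀ A ∈ F, S '' A = T '' A}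

/-- The weak topology `p`. -/
def pTop : TopologicalSpace (X ≃ᵐ X) :=
  .generateFrom {O | ∃ (T : X ≃ᵐ X) (F : Set (Set X)), IsBorelFamily F ∧ O = pBall T F}

/-- The topology `p₀`: like `p` but with uncountable Borel sets only. -/
def p0Top : TopologicalSpace (X ≃ᵐ X) :=
  .generateFrom {O | ∃ (T : X ≃ᵐ X) (F : Set (Set X)),
    IsUncountableBorelFamily F ∧ O = pBall T F}

/-- A finite family of bounded Borel functions. -/
def IsBddBorelFamily (G : Set (X → ℝ)) : Prop :=
  G.Finite ∧ ∀ f ∈ G, Measurable f ∧ ∃ C, ∀ x, |f x| ≤ C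

/-- Basic `p̃`-neighborhood `W̃(T; f₁,…,fₘ; ε)`. -/
def pTildeBall (T : X ≃ᵐ X) (G : Set (X → ℝ)) (ε : ℝ) : Set (X ≃ᵐ X) :=
  {S | ∀ f ∈ G, (⨆ x, |f (T.symm x) - f (S.symm x)|) < ε}

/-- The topology `p̃`. -/
def pTilde : TopologicalSpace (X ≃ᵐ X) :=
  .generateFrom {O | ∃ (T : X ≃ᵐ X) (G : Set (X → ℝ)) (ε : ℝ),
    IsBddBorelFamily G ∧ 0 < ε ∧ O = pTildeBall T G ε}

/-- Basic `p̄`-neighborhood `W̄(T; F₁,…,Fₖ; μ₁,…,μₙ; ε)`. -/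
def pBarBall (T : X ≃ᵐ X) (F : Set (Set X)) (M : Set (Measure X)) (ε : ℝ≥0∞) :
    Set (X ≃ᵐ X) :=
  {S | ∀ A ∈ F, ∀ μ ∈ M,
    μ (symmDiff (S '' A) (T '' A)) + μ (symmDiff (S.symm '' A) (T.symm '' A)) < ε}

/-- The topology `p̄`. -/
def pBar : TopologicalSpace (X ≃ᵐ X) :=
  .generateFrom {O | ∃ (T : X ≃ᵐ X) (F : Set (Set X)) (M : Set (Measure X)) (ε : ℝ≥0∞),
    IsBorelFamily F ∧ IsProbFamily M ∧ 0 < ε ∧ O = pBarBall T F M ε}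

/-- `T` has period exactly `n` at `x`. -/
def PerExactAt (T : X ≃ᵐ X) (n : ℕ) (x : X) : Prop :=
  (⇑T)^[n] x = x ∧ ∀ i, 0 < i → i < n → (⇑T)^[i] x ≠ x

/-- `Per_n(x)`: automorphisms with period exactly `n` at `x`. -/
def PerNAt (n : ℕ) (x : X) : Set (X ≃ᵐ X) := {T | PerExactAt T n x}

/-- `Per_n`: automorphisms of period exactly `n` at every point. -/
def PerN (n : ℕ) : Set (X ≃ᵐ X) := {T | ∀ x, PerExactAt T n x}

/-- `Per`: pointwise periodic automorphisms. -/
def PerSet : Set (X ≃ᵐ X) := {T | ∀ x, ∃ m, 0 < m ∧ (⇑T)^[m] x = x}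

/-- `Per₀`: automorphisms with `T^N = id` for some `N ≥ 1`. -/
def Per0Set : Set (X ≃ᵐ X) := {T | ∃ N, 0 < N ∧ ∀ x, (⇑T)^[N] x = x}

/-- `Ap`: aperiodic automorphisms. -/
def ApSet : Set (X ≃ᵐ X) := {T | ∀ x, ∀ n, 0 < n → (⇑T)^[n] x ≠ x}

/-- Automorphisms whose set of periodic points is at most countable. -/
def ApModCtbl : Set (X ≃ᵐ X) :=
  {T | {x | ∃ n, 0 < n ∧ (⇑T)^[n] x = x}.Countable}

/-- `Ctbl(X)`: automorphisms with at most countable support. -/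
def Ctbl : Set (X ≃ᵐ X) := {T | {x | T x ≠ x}.Countable}

/-- The full group `[T]`. -/
def fullGroup (T : X ≃ᵐ X) : Set (X ≃ᵐ X) :=
  {γ | ∀ x, ∃ m : ℤ, γ x = (T.toEquiv ^ m) x}

/-- Incompressible aperiodic automorphisms: aperiodic with an invariant Borel
probability measure. -/
def IncSet : Set (X ≃ᵐ X) :=
  {T | T ∈ ApSet ∧ ∃ μ : Measure X, IsProbabilityMeasure μ ∧
    ∀ A : Set X, MeasurableSet A → μ (⇑T ⁻¹' A) = μ A}

/-- The transposition of two points, as a Borel automorphism. -/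
noncomputable def swapEquiv {X : Type*} [MeasurableSpace X] [MeasurableSingletonClass X]
    (x y : X) : X ≃ᵐ X := by
  classical
  have h : Measurable (Equiv.swap x y) := by
    have : (Equiv.swap x y : X → X) = fun z => if z = x then y else if z = y then x else z := by
      funext z
      exact Equiv.swap_apply_def x y z
    rw [this]
    exact Measurable.ite (measurableSet_singleton x) measurable_const
      (Measurable.ite (measurableSet_singleton y) measurable_const measurable_id)
  exact
    { toEquiv := Equiv.swap x y
      measurable_toFun := h
      measurable_invFun := by simpa using h }

lemma swapEquiv_left [MeasurableSingletonClass X] (x y : X) : swapEquiv x y x = y := by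
  classical
  exact Equiv.swap_apply_left x y

lemma swapEquiv_of_ne [MeasurableSingletonClass X] {x y z : X} (hx : z ≠ x) (hy : z ≠ y) :
    swapEquiv x y z = z := by
  classical
  exact Equiv.swap_apply_of_ne_of_ne hx hy

lemma swapEquiv_symm [MeasurableSingletonClass X] (x y : X) :
    (swapEquiv x y).symm = swapEquiv x y := by
  classical
  ext z
  rfl

lemma mem_swapEquiv_image [MeasurableSingletonClass X] {x y z : X} (hx : z ≠ x) (hy : z ≠ y)
    (A : Set X) : z ∈ swapEquiv x y '' A ↔ z ∈ A := by
  constructor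
  · rintro ⟨w, hw, hwz⟩
    have : w = z := (swapEquiv x y).injective (hwz.trans (swapEquiv_of_ne hx hy).symm)
    exact this ▸ hw
  · intro hz
    exact ⟨z, hz, swapEquiv_of_ne hx hy⟩

lemma measure_symmDiff_swap_le [MeasurableSingletonClass X] {μ : Measure X} {x y : X}
    (hx : μ {x} = 0) (hy : μ {y} = 0) (A B : Set X) :
    μ (symmDiff (swapEquiv x y '' A) B) ≤ μ (symmDiff A B) := by
  have hsub : symmDiff (swapEquiv x y '' A) B ⊆ symmDiff A B ∪ ({x} ∪ {y}) := by
    intro z hz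
    by_cases h1 : z = x
    · simp [h1]
    by_cases h2 : z = y
    · simp [h2]
    left
    rw [mem_symmDiff] at hz ⊢
    rwa [mem_swapEquiv_image h1 h2] at hz
  calc μ (symmDiff (swapEquiv x y '' A) B)
      ≤ μ (symmDiff A B ∪ ({x} ∪ {y})) := measure_mono hsub
    _ ≤ μ (symmDiff A B) + (μ {x} + μ {y}) :=
        (measure_union_le _ _).trans (by gcongr; exact measure_union_le _ _)
    _ = μ (symmDiff A B) := by simp [hx, hy]

lemma isOpen_pBarBall (T : X ≃ᵐ X) {F : Set (Set X)} (M : Set (Measure X)) (ε : ℝ≥0∞)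
    (hF : IsBorelFamily F) : IsOpen[pTop] (pBarBall T F M ε) := by
  let _ : TopologicalSpace (X ≃ᵐ X) := pTop
  rw [isOpen_iff_forall_mem_open]
  intro S₀ hS₀
  refine ⟨pBall S₀ (F ∪ (fun A => S₀.symm '' A) '' F), ?_, ?_, fun _ _ => rfl⟩
  · intro S hS A hA μ hμ
    have h1 : S '' A = S₀ '' A := hS A (Or.inl hA)
    have h2 : S.symm '' A = S₀.symm '' A := by
      have h := hS _ (Or.inr ⟨A, hA, rfl⟩)
      have hc : S₀ '' (S₀.symm '' A) = A := by simp [image_image]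
      simp only [hc] at h
      conv_lhs => rw [← h]
      simp [image_image]
    rw [h1, h2]
    exact hS₀ A hA μ hμ
  · refine TopologicalSpace.isOpen_generateFrom_of_mem ⟨S₀, _, ⟨hF.1.union (hF.1.image _), ?_⟩, rfl⟩
    rintro A (hA | ⟨B, hB, rfl⟩)
    · exact hF.2 A hA
    · exact S₀.symm.measurableEmbedding.measurableSet_image.2 (hF.2 B hB)

lemma countable_atoms [MeasurableSingletonClass X] {M : Set (Measure X)} (hM : IsProbFamily M) :
    {x | ∃ μ ∈ M, μ {x} ≠ 0}.Countable := by
  have h : {x | ∃ μ ∈ M, μ {x} ≠ 0} = ⋃ μ ∈ M, {x | 0 < μ {x}} := by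
    ext x
    simp [pos_iff_ne_zero]
  rw [h]
  refine hM.1.countable.biUnion fun μ hμ => ?_
  have := hM.2 μ hμ
  exact Measure.countable_meas_pos_of_disjoint_iUnion (fun x => measurableSet_singleton x)
    (fun x y hxy => disjoint_singleton.2 hxy)

/-- The countable exceptional set depends on `O`. The induction runs over the generation of the
topology, since the `p̄`-balls are only used as a subbase. -/
lemma exists_countable_swap_mem [MeasurableSingletonClass X] {O : Set (X ≃ᵐ X)}
    (hO : IsOpen[pBar] O) (hid : MeasurableEquiv.refl X ∈ O) :
    ∃ C : Set X, C.Countable ∧ ∀ x ∉ C, ∀ y ∉ C, swapEquiv x y ∈ O := by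
  have hO' : TopologicalSpace.GenerateOpen _ O := hO
  induction hO' with
  | basic O h =>
    obtain ⟨T, F, M, ε, -, hM, -, rfl⟩ := h
    refine ⟨_, countable_atoms hM, fun x hx y hy A hA μ hμ => ?_⟩
    have hx0 : μ {x} = 0 := by
      by_contra h
      exact hx ⟨μ, hμ, h⟩
    have hy0 : μ {y} = 0 := by
      by_contra h
      exact hy ⟨μ, hμ, h⟩
    have h := hid A hA μ hμ
    have e1 : (MeasurableEquiv.refl X) '' A = A := image_id A
    have e2 : (MeasurableEquiv.refl X).symm '' A = A := image_id A
    rw [e1, e2] at h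
    rw [swapEquiv_symm]
    exact (add_le_add (measure_symmDiff_swap_le hx0 hy0 _ _)
      (measure_symmDiff_swap_le hx0 hy0 _ _)).trans_lt h
  | univ => exact ⟨∅, countable_empty, fun _ _ _ _ => mem_univ _⟩
  | inter s t hs ht ihs iht =>
    obtain ⟨C, hC, h1⟩ := ihs hs hid.1
    obtain ⟨D, hD, h2⟩ := iht ht hid.2
    refine ⟨C ∪ D, hC.union hD, fun x hx y hy => ⟨h1 x ?_ y ?_, h2 x ?_ y ?_⟩⟩ <;>
      simp_all
  | sUnion K hK ih =>
    obtain ⟨s, hs, hids⟩ := hid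
    obtain ⟨C, hC, h⟩ := ih s hs (hK s hs) hids
    exact ⟨C, hC, fun x hx y hy => ⟨s, hs, h x hx y hy⟩⟩

lemma exists_uncountable_compl [StandardBorelSpace X] [Uncountable X] :
    ∃ A : Set X, MeasurableSet A ∧ ¬ A.Countable ∧ ¬ Aᶜ.Countable := by
  have e : X ≃ᵐ ℝ := PolishSpace.measurableEquivOfNotCountable
    (not_countable_iff.2 inferInstance) (not_countable_iff.2 inferInstance)
  have key : ∀ B : Set ℝ, Cardinal.mk B = Cardinal.continuum → ¬ (e ⁻¹' B).Countable := by
    intro B hB h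
    have h' := h.image e
    rw [image_preimage_eq _ e.surjective, ← Cardinal.le_aleph0_iff_set_countable, hB] at h'
    exact absurd h' (not_le.2 Cardinal.aleph0_lt_continuum)
  refine ⟨e ⁻¹' Iio 0, e.measurable measurableSet_Iio, key _ (Cardinal.mk_Iio_real 0), ?_⟩
  rw [← preimage_compl, compl_Iio]
  exact key _ (Cardinal.mk_Ici_real 0)

/-- The weak topology `p` is strictly stronger (finer) than `p̄`: every `p̄`-open set is
`p`-open, but there exists a `p`-open set which is not `p̄`-open. -/
theorem p_lt_pBar {X : Type*} [MeasurableSpace X] [StandardBorelSpace X] [Uncountable X] :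
    (pTop : TopologicalSpace (X ≃ᵐ X)) < pBar := by
  refine lt_of_le_not_ge (le_generateFrom ?_) fun hle => ?_
  · rintro O ⟨T, F, M, ε, hF, -, -, rfl⟩
    exact isOpen_pBarBall T M ε hF
  · obtain ⟨A, hA, hAc, hAc'⟩ := exists_uncountable_compl (X := X)
    have hp : IsOpen[pTop] (pBall (MeasurableEquiv.refl X) {A}) :=
      TopologicalSpace.isOpen_generateFrom_of_mem
        ⟨_, _, ⟨finite_singleton A, by rintro B rfl; exact hA⟩, rfl⟩
    obtain ⟨C, hC, h⟩ := exists_countable_swap_mem (hle _ hp) fun _ _ => rfl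
    obtain ⟨x, hxA, hxC⟩ := not_subset.1 fun hs : A ⊆ C => hAc (hC.mono hs)
    obtain ⟨y, hyA, hyC⟩ := not_subset.1 fun hs : Aᶜ ⊆ C => hAc' (hC.mono hs)
    have hS : swapEquiv x y '' A = A := (h x hxC y hyC A rfl).trans (image_id A)
    exact hyA (hS ▸ ⟨x, hxA, swapEquiv_left x y⟩)

end BDK
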